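/- arXiv:2308.06863 — 2 statements merged into one kernel-verified Lean document; each statement's English description precedes it below -/
import Mathlib

section
/- For every positive integer n, the n×n Delannoy matrix D_n = (D(i,j))_{0≤i,j<n}, viewed over ℚ (or ℝ), is invertible, and the (i,j) entry of its inverse is given by (D_n^{-1})(i,j) = 2·(−1)^{i+j} · ∑_{k=0}^{n−1} C(k,i)·C(k,j)·2^{−(k+1)} for all 0 ≤ i,j ≤ n−1. -/
/-!
The Delannoy matrix has the factorization `D = L Δ Lᵀ`, where `L i k = C(i,k)` is the lower
triangular Pascal matrix and `Δ = diag (2 ^ k)`; entrywise this is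
`D(i,j) = ∑ k, C(i,k) C(j,k) 2 ^ k` (`delannoy_eq_sum`). The inverse of `L` is the signed Pascal
matrix `M i j = (-1) ^ (i + j) C(i,j)` (`sum_choose_mul_signed_choose`), so `D⁻¹ = Mᵀ Δ⁻¹ M`, whose
entries are `∑ k, (-1) ^ (i + j) C(k,i) C(k,j) / 2 ^ k`.
-/

/-- The Delannoy number `delannoy k l` is the number of lattice paths from `(0,0)` to `(k,l)`
using only steps `(1,0)`, `(0,1)`, `(1,1)`. -/
def delannoy : ℕ → ℕ → ℕ
  | 0, _ => 1
  | _ + 1, 0 => 1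
  | k + 1, l + 1 => delannoy k (l + 1) + delannoy (k + 1) l + delannoy k l

/-- The sums `∑ k, C(i,k) C(j,k) 2 ^ k`, truncated at `k ≤ N`, satisfy the Delannoy recurrence up to
a boundary term: applying Pascal's rule to each summand makes the defect telescope. -/
lemma delannoy_sum_recurrence (N i j : ℕ) :
    ∑ k ∈ Finset.range (N + 1), (i + 1).choose k * (j + 1).choose k * 2 ^ k
        + 2 * (i.choose N * j.choose N * 2 ^ N) =
      ∑ k ∈ Finset.range (N + 1), i.choose k * (j + 1).choose k * 2 ^ k
        + ∑ k ∈ Finset.range (N + 1), (i + 1).choose k * j.choose k * 2 ^ k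
        + ∑ k ∈ Finset.range (N + 1), i.choose k * j.choose k * 2 ^ k := by
  induction N with
  | zero => simp
  | succ N ih =>
    simp only [Finset.sum_range_succ _ (N + 1)]
    simp only [Nat.choose_succ_succ' _ N, pow_succ] at ih ⊢
    linarith

lemma delannoy_eq_sum (i j N : ℕ) (hN : i < N) :
    delannoy i j = ∑ k ∈ Finset.range N, i.choose k * j.choose k * 2 ^ k := by
  obtain ⟨N, rfl⟩ : ∃ M, N = M + 1 := ⟨N - 1, by omega⟩
  induction i, j using delannoy.induct with
  | case1 j => simp [delannoy, Finset.sum_range_succ']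
  | case2 i => simp [delannoy, Finset.sum_range_succ']
  | case3 i j ih₁ ih₂ ih₃ =>
    have h := delannoy_sum_recurrence N i j
    -- the boundary term vanishes because `i < N`
    rw [Nat.choose_eq_zero_of_lt (show i < N by omega)] at h
    rw [delannoy, ih₁ (by omega), ih₂ hN, ih₃ (by omega)]
    linarith

/-- The Pascal matrix and the signed Pascal matrix are mutually inverse. -/
lemma sum_choose_mul_signed_choose (i j N : ℕ) (hN : i < N) :
    ∑ k ∈ Finset.range N, (i.choose k : ℚ) * ((-1) ^ (k + j) * (k.choose j : ℚ)) =
      if i = j then 1 else 0 := by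
  induction i generalizing j N with
  | zero =>
    obtain ⟨N, rfl⟩ : ∃ M, N = M + 1 := ⟨N - 1, by omega⟩
    cases j <;> simp [Finset.sum_range_succ']
  | succ i ih =>
    obtain ⟨N, rfl⟩ : ∃ M, N = M + 1 := ⟨N - 1, by omega⟩
    have hi : i < N := by omega
    -- Pascal's rule in the upper index `i + 1`
    have split : ∑ k ∈ Finset.range (N + 1),
          ((i + 1).choose k : ℚ) * ((-1) ^ (k + j) * (k.choose j : ℚ)) =
        ∑ k ∈ Finset.range (N + 1), (i.choose k : ℚ) * ((-1) ^ (k + j) * (k.choose j : ℚ)) +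
        ∑ k ∈ Finset.range N,
          (i.choose k : ℚ) * ((-1) ^ (k + 1 + j) * ((k + 1).choose j : ℚ)) := by
      simp only [Finset.sum_range_succ' _ N, Nat.choose_succ_succ' i, Nat.cast_add, add_mul,
        Finset.sum_add_distrib, Nat.choose_zero_right]
      ring
    rw [split, ih j (N + 1) (by omega)]
    cases j with
    | zero =>
      have h := ih 0 N hi
      have e : ∑ k ∈ Finset.range N,
          (i.choose k : ℚ) * ((-1) ^ (k + 1 + 0) * ((k + 1).choose 0 : ℚ)) =
          -∑ k ∈ Finset.range N, (i.choose k : ℚ) * ((-1) ^ (k + 0) * (k.choose 0 : ℚ)) := by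
        rw [← Finset.sum_neg_distrib]
        refine Finset.sum_congr rfl fun k _ => ?_
        simp [pow_succ]
      rw [e, h]
      simp
    | succ j =>
      -- Pascal's rule in `C(k+1,j+1)`
      have e : ∑ k ∈ Finset.range N,
          (i.choose k : ℚ) * ((-1) ^ (k + 1 + (j + 1)) * ((k + 1).choose (j + 1) : ℚ)) =
          ∑ k ∈ Finset.range N, (i.choose k : ℚ) * ((-1) ^ (k + j) * (k.choose j : ℚ)) -
          ∑ k ∈ Finset.range N,
            (i.choose k : ℚ) * ((-1) ^ (k + (j + 1)) * (k.choose (j + 1) : ℚ)) := by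
        rw [← Finset.sum_sub_distrib]
        refine Finset.sum_congr rfl fun k _ => ?_
        rw [Nat.choose_succ_succ']
        push_cast
        ring
      rw [e, ih j N hi, ih (j + 1) N hi]
      simp

/-- The `n × n` Delannoy matrix over `ℚ` is invertible, and the `(i,j)` entry of its inverse is
`2 (−1)^{i+j} ∑_{k=0}^{n−1} C(k,i) C(k,j) 2^{−(k+1)}`. -/
theorem delannoy_matrix_inverse (n : ℕ) (hn : 0 < n) :
    IsUnit (Matrix.of fun i j : Fin n => (delannoy i j : ℚ)).det ∧
    ∀ i j : Fin n,
      (Matrix.of fun i j : Fin n => (delannoy i j : ℚ))⁻¹ i j =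
        2 * (-1) ^ ((i : ℕ) + (j : ℕ)) *
          ∑ k : Fin n, (Nat.choose k i : ℚ) * (Nat.choose k j : ℚ) / 2 ^ ((k : ℕ) + 1) := by
  set D : Matrix (Fin n) (Fin n) ℚ := Matrix.of fun i j => (delannoy i j : ℚ) with hD
  let L : Matrix (Fin n) (Fin n) ℚ := Matrix.of fun i k => ((i : ℕ).choose k : ℚ)
  let M : Matrix (Fin n) (Fin n) ℚ :=
    Matrix.of fun i k => (-1) ^ ((i : ℕ) + (k : ℕ)) * ((i : ℕ).choose k : ℚ)
  let Δ : Matrix (Fin n) (Fin n) ℚ := Matrix.diagonal fun k => 2 ^ (k : ℕ)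
  let Δinv : Matrix (Fin n) (Fin n) ℚ := Matrix.diagonal fun k => (2 ^ (k : ℕ))⁻¹
  have hLM : L * M = 1 := by
    ext i j
    have h := sum_choose_mul_signed_choose i j n i.2
    rw [Finset.sum_range] at h
    simpa [L, M, Matrix.mul_apply, Matrix.one_apply, Fin.ext_iff] using h
  have hML : M * L = 1 := mul_eq_one_comm.mp hLM
  have hΔ : Δ * Δinv = 1 := by
    simp [Δ, Δinv, Matrix.diagonal_mul_diagonal]
  have hfac : D = L * Δ * L.transpose := by
    ext i j
    have h := delannoy_eq_sum i j n i.2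
    rw [Finset.sum_range] at h
    rw [Matrix.mul_apply]
    simp only [hD, L, Δ, Matrix.mul_diagonal, Matrix.of_apply, Matrix.transpose_apply, h]
    push_cast
    exact Finset.sum_congr rfl fun k _ => by ring
  have hinv : D * (M.transpose * Δinv * M) = 1 := by
    have hT : L.transpose * M.transpose = 1 := by
      rw [← Matrix.transpose_mul, hML, Matrix.transpose_one]
    calc D * (M.transpose * Δinv * M)
        = L * (Δ * (L.transpose * M.transpose) * Δinv) * M := by
          rw [hfac]; simp only [Matrix.mul_assoc]
      _ = 1 := by rw [hT, Matrix.mul_one, hΔ, Matrix.mul_one, hLM]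
  refine ⟨Matrix.isUnit_det_of_right_inverse hinv, fun i j => ?_⟩
  rw [Matrix.inv_eq_right_inv hinv, Matrix.mul_apply, Finset.mul_sum]
  refine Finset.sum_congr rfl fun k _ => ?_
  simp only [Δinv, M, Matrix.mul_diagonal, Matrix.of_apply, Matrix.transpose_apply]
  -- the signs combine through `(-1) ^ (2 * k) = 1`
  have hs : ((-1 : ℚ) ^ (k : ℕ)) * (-1) ^ (k : ℕ) = 1 := by
    rw [← mul_pow]; simp
  rw [pow_add, pow_add, pow_add, pow_succ]
  field_simp
  linear_combination (((k : ℕ).choose i : ℚ) * ((k : ℕ).choose j : ℚ)) * hs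
end

section
/- Let 0 < a, b < 1 with (1−a)(1−b) > 1/2, and let x, y : ℕ → ℕ be sequences with x(n) ≥ 1, y(n) ≥ 1, x(n)/n → a and y(n)/n → b as n → ∞. Write a_n := x(n)/n, b_n := y(n)/n, and r_n := √(a_n² + b_n²). Then the ratio of S(n, x(n), y(n)) to the expression (a_n + b_n + r_n) · ((a_n + r_n)^{b_n} · (b_n + r_n)^{a_n} / (a_n^{a_n} · b_n^{b_n}))^n / (2·√(2πn)·√(a_n · b_n · r_n)) tends to 1 as n → ∞ (all powers are real powers). -/
/-!
The complete series `D(x,y) = ∑ₖ C(k,x) C(k,y) 2^{-(k+1)}` is a Delannoy number, with the contour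
integral representation (`hasSum_delannoy`)
`D(x,y) = (1/2π) ∫ (1 + ζ)^y / ((1 - ζ)^{y+1} ζ^x) dθ`, `ζ = z exp (iθ)`, for every `0 < z < 1`.

The condition `(1 - a)(1 - b) > 1/2` says that the terms already decrease geometrically around
`k = n`, so that `S(n,x,y) / D(x,y) → 1` (`tendsto_partialSum_div`).

The asymptotics of `D(x,y)` come from the saddle point method, with `z` chosen to be the exact saddle
point `a_n / (b_n + r_n)` of the integrand. With `θ = u / √n`, the normalized integrand converges
pointwise to a Gaussian (`tendsto_ratio_pow`), and an explicit Gaussian bound valid for all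
`|θ| ≤ π` (`norm_ratio_le`) allows dominated convergence (`tendsto_integral_normKernel`).
Expressing the value of the integrand at the saddle point and the variance of the Gaussian through
`a_n`, `b_n`, `r_n` (`saddle_eqs`, `target_eq`) gives the formula.
-/

open Filter Real

/-- The partial sum `S(n,x,y) = ∑_{k=0}^{n−1} C(k,x) C(k,y) 2^{−(k+1)}`. -/
noncomputable def delannoyPartialSum (n x y : ℕ) : ℝ :=
  ∑ k ∈ Finset.range n, (Nat.choose k x : ℝ) * (Nat.choose k y : ℝ) / 2 ^ (k + 1)

/-! ### The contour integral -/

theorem hasSum_choose_mul_pow (y : ℕ) {w : ℂ} (hw : ‖w‖ < 1) :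
    HasSum (fun k : ℕ => (k.choose y : ℂ) * w ^ k) (w ^ y / (1 - w) ^ (y + 1)) := by
  have h := (hasSum_choose_mul_geometric_of_norm_lt_one y hw).mul_left (w ^ y)
  rw [← hasSum_nat_add_iff' y]
  have h0 : ∑ i ∈ Finset.range y, ((i.choose y : ℕ) : ℂ) * w ^ i = 0 :=
    Finset.sum_eq_zero fun i hi => by
      rw [Nat.choose_eq_zero_of_lt (Finset.mem_range.1 hi)]; simp
  rw [h0, sub_zero]
  convert! h using 1
  · funext k; ring
  · ring

theorem integral_exp_int (j : ℤ) :
    ∫ θ in (-π)..π, Complex.exp (j * (θ * Complex.I)) = if j = 0 then 2 * (π : ℂ) else 0 := by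
  split_ifs with hj
  · subst hj; simp; ring
  · have hc : (j : ℂ) * Complex.I ≠ 0 := by simp [hj]
    have h := integral_exp_mul_complex (a := -π) (b := π) hc
    have h1 : ∀ θ : ℝ, (j : ℂ) * (θ * Complex.I) = (j : ℂ) * Complex.I * θ := fun θ => by ring
    simp_rw [h1]
    rw [h]
    have h2 : Complex.exp ((j : ℂ) * Complex.I * (π : ℝ)) =
        Complex.exp ((j : ℂ) * Complex.I * ((-π : ℝ) : ℂ)) := by
      rw [Complex.exp_eq_exp_iff_exists_int]
      exact ⟨j, by push_cast; ring⟩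
    rw [h2]; simp

/-- Cauchy formula for the coefficient of `ζ ^ x` in `(1 + ζ) ^ k`, on the circle `‖ζ‖ = z`. -/
theorem integral_circle_choose {z : ℝ} (hz : 0 < z) (k x : ℕ) :
    ∫ θ in (-π)..π, (1 + (z : ℂ) * Complex.exp (θ * Complex.I)) ^ k /
      ((z : ℂ) * Complex.exp (θ * Complex.I)) ^ x = 2 * π * (k.choose x : ℂ) := by
  have hz' : (z : ℂ) ≠ 0 := by exact_mod_cast hz.ne'
  have h1 : ∀ θ : ℝ, (1 + (z : ℂ) * Complex.exp (θ * Complex.I)) ^ k /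
      ((z : ℂ) * Complex.exp (θ * Complex.I)) ^ x =
      ∑ m ∈ Finset.range (k + 1), ((k.choose m : ℂ) * (z : ℂ) ^ m / (z : ℂ) ^ x) *
        Complex.exp (((m : ℤ) - (x : ℤ) : ℤ) * (θ * Complex.I)) := by
    intro θ
    rw [add_comm, add_pow, Finset.sum_div]
    refine Finset.sum_congr rfl fun m _ => ?_
    rw [Complex.exp_int_mul, zpow_sub₀ (Complex.exp_ne_zero _), zpow_natCast, zpow_natCast,
      mul_pow, mul_pow]
    simp only [one_pow]
    field_simp
  simp_rw [h1]
  rw [intervalIntegral.integral_finsetSum]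
  · simp_rw [intervalIntegral.integral_const_mul, integral_exp_int]
    rw [Finset.sum_eq_single x]
    · simp; field_simp
    · intro m _ hm
      rw [if_neg (by omega)]; simp
    · intro hx
      rw [Nat.choose_eq_zero_of_lt (by simpa using hx)]; simp
  · intro m _
    exact (by fun_prop : Continuous _).intervalIntegrable _ _

theorem norm_circle {z : ℝ} (hz : 0 < z) (θ : ℝ) :
    ‖(z : ℂ) * Complex.exp (θ * Complex.I)‖ = z := by
  rw [norm_mul, Complex.norm_exp_ofReal_mul_I, mul_one, Complex.norm_real, Real.norm_of_nonneg hz.le]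

/-- Contour integral for the complete series. Writing `C(k,x)` as a Cauchy integral and summing
over `k` under the integral sign gives
`∑ C(k,y) ((1 + ζ) / 2) ^ k / 2 = (1 + ζ) ^ y / (1 - ζ) ^ (y + 1)`, where `‖(1 + ζ) / 2‖ < 1` because
`‖ζ‖ = z < 1`. -/
theorem hasSum_delannoy {z : ℝ} (hz : 0 < z) (hz1 : z < 1) (x y : ℕ) :
    HasSum (fun k : ℕ => (k.choose x : ℂ) * (k.choose y : ℂ) / 2 ^ (k + 1))
      ((2 * π : ℂ)⁻¹ * ∫ θ in (-π)..π, (1 + (z : ℂ) * Complex.exp (θ * Complex.I)) ^ y /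
        (1 - (z : ℂ) * Complex.exp (θ * Complex.I)) ^ (y + 1) /
        ((z : ℂ) * Complex.exp (θ * Complex.I)) ^ x) := by
  have hpi : (2 * π : ℂ) ≠ 0 := by exact_mod_cast Real.two_pi_pos.ne'
  have hw : ∀ θ : ℝ, ‖(1 + (z : ℂ) * Complex.exp (θ * Complex.I)) / 2‖ ≤ (1 + z) / 2 := by
    intro θ
    rw [norm_div]
    have := norm_add_le (1 : ℂ) ((z : ℂ) * Complex.exp (θ * Complex.I))
    rw [norm_circle hz, norm_one] at this
    simp only [Complex.norm_ofNat]
    linarith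
  have hne : ∀ θ : ℝ, (z : ℂ) * Complex.exp (θ * Complex.I) ≠ 0 := fun θ =>
    norm_pos_iff.1 (by rw [norm_circle hz]; exact hz)
  have key := intervalIntegral.hasSum_integral_of_dominated_convergence
    (μ := MeasureTheory.volume) (a := -π) (b := π)
    (F := fun (k : ℕ) (θ : ℝ) => ((k.choose y : ℂ) / 2 ^ (k + 1)) *
      ((1 + (z : ℂ) * Complex.exp (θ * Complex.I)) ^ k /
      ((z : ℂ) * Complex.exp (θ * Complex.I)) ^ x))
    (f := fun θ : ℝ => (1 + (z : ℂ) * Complex.exp (θ * Complex.I)) ^ y /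
        (1 - (z : ℂ) * Complex.exp (θ * Complex.I)) ^ (y + 1) /
        ((z : ℂ) * Complex.exp (θ * Complex.I)) ^ x)
    (fun k _ => ‖(k.choose y : ℂ) * (((1 + z) / 2 : ℝ) : ℂ) ^ k‖ * (2 * z ^ x)⁻¹)
    ?_ ?_ ?_ ?_ ?_
  · have := key.mul_left ((2 * π)⁻¹ : ℂ)
    convert! this using 1
    funext k
    rw [intervalIntegral.integral_const_mul, integral_circle_choose hz]
    field_simp
  · intro k
    refine Continuous.aestronglyMeasurable (Continuous.mul continuous_const ?_)
    exact Continuous.div (by fun_prop) (by fun_prop) fun θ => pow_ne_zero _ (hne θ)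
  · intro k
    refine Eventually.of_forall fun θ _ => ?_
    have e : ((k.choose y : ℂ) / 2 ^ (k + 1)) *
      ((1 + (z : ℂ) * Complex.exp (θ * Complex.I)) ^ k /
      ((z : ℂ) * Complex.exp (θ * Complex.I)) ^ x) = (k.choose y : ℂ) *
      ((1 + (z : ℂ) * Complex.exp (θ * Complex.I)) / 2) ^ k *
      (2 * ((z : ℂ) * Complex.exp (θ * Complex.I)) ^ x)⁻¹ := by
      rw [div_pow, pow_succ]; field_simp
    rw [e, norm_mul, norm_mul, norm_mul, norm_inv, norm_mul, norm_pow, norm_pow, norm_pow, norm_circle hz,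
      Complex.norm_real, Real.norm_of_nonneg (by positivity : 0 ≤ (1 + z) / 2)]
    simp only [Complex.norm_ofNat]
    gcongr
    exact hw θ
  · refine Eventually.of_forall fun θ _ => ?_
    refine Summable.mul_right _ (Summable.norm (hasSum_choose_mul_pow y ?_).summable)
    rw [Complex.norm_real, Real.norm_of_nonneg (by positivity : 0 ≤ (1 + z) / 2)]
    linarith
  · exact intervalIntegrable_const
  · refine Eventually.of_forall fun θ _ => ?_
    have h := (hasSum_choose_mul_pow y (lt_of_le_of_lt (hw θ) (by linarith))).mul_right
      (2 * ((z : ℂ) * Complex.exp (θ * Complex.I)) ^ x)⁻¹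
    have h1 : (1 - (z : ℂ) * Complex.exp (θ * Complex.I)) ≠ 0 := by
      intro h0
      have := congrArg norm (sub_eq_zero.1 h0)
      rw [norm_circle hz, norm_one] at this
      linarith
    convert! h using 1
    · funext k
      rw [div_pow, pow_succ]; field_simp
    · rw [show (1 - (1 + (z : ℂ) * Complex.exp (θ * Complex.I)) / 2) =
        (1 - (z : ℂ) * Complex.exp (θ * Complex.I)) / 2 by ring, div_pow, div_pow, pow_succ 2]
      have := hne θ
      field_simp

/-! ### Saddle point asymptotics -/

/-- The limit `(1 + t / N + o(1 / N)) ^ N → exp t` with an arbitrary sequence of exponents `y n`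
in place of `N`. -/
theorem tendsto_one_add_pow {g : ℕ → ℂ} {y : ℕ → ℕ} {t : ℂ} (hg : Tendsto g atTop (nhds 0))
    (h : Tendsto (fun n => (y n : ℂ) * g n) atTop (nhds t)) :
    Tendsto (fun n => (1 + g n) ^ y n) atTop (nhds (Complex.exp t)) := by
  have hd : ContinuousAt (dslope Complex.log 1) 1 :=
    continuousAt_dslope_same.2 (Complex.differentiableAt_log (by simp))
  have h1 : Tendsto (fun n => 1 + g n) atTop (nhds 1) := by simpa using hg.const_add 1
  have h2 : Tendsto (fun n => dslope Complex.log 1 (1 + g n)) atTop (nhds 1) := by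
    have := hd.tendsto.comp h1
    rw [dslope_same, (Complex.hasDerivAt_log (by simp : (1:ℂ) ∈ Complex.slitPlane)).deriv] at this
    simpa [Function.comp_def] using this
  have h3 := (Complex.continuous_exp.tendsto _).comp (h.mul h2)
  rw [mul_one] at h3
  refine h3.congr' ?_
  filter_upwards [h1.eventually_ne one_ne_zero] with n hn
  have := sub_smul_dslope Complex.log 1 (1 + g n)
  simp only [add_sub_cancel_left, smul_eq_mul, Complex.log_one, sub_zero] at this
  simp only [Function.comp]
  rw [mul_assoc, this, Complex.exp_nat_mul, Complex.exp_log hn]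

/-- Second-order Taylor expansion of `exp` at `0`, with the remainder packaged as `w ^ 2 * ψ w`;
`ψ` is the quotient `(exp w - 1 - w) / w ^ 2`, extended by its limit at `0`. -/
theorem exists_exp_remainder : ∃ ψ : ℂ → ℂ, Tendsto ψ (nhds 0) (nhds (1 / 2)) ∧
    ∀ w, Complex.exp w = 1 + w + w ^ 2 * ψ w := by
  refine ⟨fun w => if w = 0 then 1 / 2 else (Complex.exp w - 1 - w) / w ^ 2, ?_, ?_⟩
  · rw [tendsto_iff_norm_sub_tendsto_zero]
    refine squeeze_zero' (Eventually.of_forall fun _ => norm_nonneg _) (g := fun w : ℂ => ‖w‖) ?_ ?_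
    · filter_upwards [Metric.closedBall_mem_nhds (0 : ℂ) one_pos] with w hw
      rw [mem_closedBall_zero_iff] at hw
      split_ifs with h0
      · simp
      · have hb := Complex.exp_bound hw (n := 3) (by norm_num)
        simp [Finset.sum_range_succ, Nat.factorial] at hb
        have e : (Complex.exp w - 1 - w) / w ^ 2 - 1 / 2 =
          (Complex.exp w - (1 + w + w ^ 2 / 2)) / w ^ 2 := by field_simp; ring
        rw [e, norm_div, norm_pow, div_le_iff₀ (by positivity)]
        refine hb.trans ?_
        have : 0 ≤ ‖w‖ ^ 3 := by positivity
        nlinarith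
    · simpa using (continuous_norm.tendsto (0 : ℂ))
  · intro w
    dsimp only
    split_ifs with h0
    · simp [h0]
    · field_simp; ring

/-- On the circle `‖ζ‖ = z` the modulus of `(1 + ζ) / (1 - ζ)`, relative to its value at `ζ = z`,
decays like a Gaussian in the angle `θ`, on the whole range `|θ| ≤ π`. -/
theorem norm_ratio_le {z : ℝ} (hz : 0 < z) (hz1 : z < 1) {θ : ℝ} (hθ : |θ| ≤ π) :
    ‖(1 + (z : ℂ) * Complex.exp (θ * Complex.I)) * (1 - z) /
      ((1 - (z : ℂ) * Complex.exp (θ * Complex.I)) * (1 + z))‖ ≤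
      Real.exp (-(2 * z / (1 + z) ^ 2 / π ^ 2) * θ ^ 2) := by
  have hp : Complex.normSq (1 + (z : ℂ) * Complex.exp (θ * Complex.I)) =
      1 + 2 * z * Real.cos θ + z ^ 2 := by
    rw [Complex.exp_mul_I, Complex.normSq_apply]
    simp [Complex.cos_ofReal_re, Complex.sin_ofReal_re]
    nlinarith [Real.sin_sq_add_cos_sq θ]
  have hm : Complex.normSq (1 - (z : ℂ) * Complex.exp (θ * Complex.I)) =
      1 - 2 * z * Real.cos θ + z ^ 2 := by
    rw [Complex.exp_mul_I, Complex.normSq_apply]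
    simp [Complex.cos_ofReal_re, Complex.sin_ofReal_re]
    nlinarith [Real.sin_sq_add_cos_sq θ]
  refine le_of_sq_le_sq ?_ (Real.exp_pos _).le
  rw [← Complex.normSq_eq_norm_sq, Complex.normSq_div, Complex.normSq_mul, Complex.normSq_mul, hp,
    hm, ← Real.exp_nat_mul]
  have e1 : Complex.normSq (1 - (z : ℂ)) = (1 - z) ^ 2 := by
    rw [← Complex.ofReal_one, ← Complex.ofReal_sub, Complex.normSq_ofReal]; ring
  have e2 : Complex.normSq (1 + (z : ℂ)) = (1 + z) ^ 2 := by
    rw [← Complex.ofReal_one, ← Complex.ofReal_add, Complex.normSq_ofReal]; ring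
  rw [e1, e2]
  have hc := Real.cos_le_one_sub_mul_cos_sq hθ
  have hc1 := Real.cos_le_one θ
  have hc2 := Real.neg_one_le_cos θ
  have hz2 : 0 < (1 - z) ^ 2 := pow_pos (by linarith) 2
  have hd : (1 - z) ^ 2 ≤ 1 - 2 * z * Real.cos θ + z ^ 2 := by nlinarith
  have hn : 0 ≤ 1 + 2 * z * Real.cos θ + z ^ 2 := by nlinarith [sq_nonneg (1 - z)]
  calc (1 + 2 * z * Real.cos θ + z ^ 2) * (1 - z) ^ 2 /
        ((1 - 2 * z * Real.cos θ + z ^ 2) * (1 + z) ^ 2)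
      = (1 + 2 * z * Real.cos θ + z ^ 2) / (1 + z) ^ 2 *
        ((1 - z) ^ 2 / (1 - 2 * z * Real.cos θ + z ^ 2)) := by
        rw [div_mul_div_comm]; ring
    _ ≤ (1 + 2 * z * Real.cos θ + z ^ 2) / (1 + z) ^ 2 * 1 := by
        gcongr
        rw [div_le_one (by linarith)]; exact hd
    _ ≤ 1 + -(2 * (2 * z / (1 + z) ^ 2 / π ^ 2) * θ ^ 2) := by
        rw [mul_one, div_le_iff₀ (by positivity)]
        have : (1 + -(2 * (2 * z / (1 + z) ^ 2 / π ^ 2) * θ ^ 2)) * (1 + z) ^ 2 =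
          (1 + z) ^ 2 - 2 * z * (2 / π ^ 2 * θ ^ 2) := by
          field_simp; ring
        rw [this]; nlinarith
    _ ≤ _ := by
        rw [add_comm]
        refine (Real.add_one_le_exp _).trans (le_of_eq ?_)
        congr 1; push_cast; ring

theorem norm_one_sub_div_le {z : ℝ} (hz : 0 < z) (hz1 : z < 1) (θ : ℝ) :
    ‖(1 - (z : ℂ)) / (1 - (z : ℂ) * Complex.exp (θ * Complex.I))‖ ≤ 1 := by
  have h := norm_sub_norm_le (1 : ℂ) ((z : ℂ) * Complex.exp (θ * Complex.I))
  rw [norm_mul, Complex.norm_exp_ofReal_mul_I, mul_one, Complex.norm_real,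
    Real.norm_of_nonneg hz.le, norm_one] at h
  rw [norm_div, div_le_one (by linarith)]
  refine le_trans (le_of_eq ?_) h
  rw [← Complex.ofReal_one, ← Complex.ofReal_sub, Complex.norm_real,
    Real.norm_of_nonneg (by linarith)]

theorem ratio_eq {z e d : ℂ} (h1 : 1 - z ≠ 0) (h2 : 1 + z ≠ 0) (hd : d ≠ 0)
    (h : 1 - z * (1 + e) = (1 - z) * d) :
    (1 + z * (1 + e)) * (1 - z) / ((1 - z * (1 + e)) * (1 + z)) =
      1 + 2 * z / ((1 - z) * (1 + z)) * e / d := by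
  have h' : (1 + z * (1 + e)) * (1 - z) = (1 - z) * d * (1 + z) + 2 * z * e := by
    linear_combination (1 + z) * h
  rw [h, h']
  field_simp

/-- Pointwise limit of the rescaled integrand. The exponential factor removes the first-order term
in `θ` of `log ((1 + ζ) / (1 - ζ))`, `ζ = z exp (iθ)`, whose derivative at `θ = 0` is
`2iz / (1 - z²)`; the second-order term is `-z(1 + z²) / (1 - z²)² * θ²`. -/
theorem tendsto_ratio_pow {z : ℕ → ℝ} {z₀ : ℝ} (hz0 : 0 < z₀) (hz1 : z₀ < 1)
    (hz : Tendsto z atTop (nhds z₀)) {θ : ℕ → ℝ} (hθ : Tendsto θ atTop (nhds 0))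
    {y : ℕ → ℕ} {β : ℝ} (hy : Tendsto (fun n => (y n : ℝ) * θ n ^ 2) atTop (nhds β)) :
    Tendsto (fun n => ((1 + (z n : ℂ) * Complex.exp (θ n * Complex.I)) * (1 - z n) /
      ((1 - (z n : ℂ) * Complex.exp (θ n * Complex.I)) * (1 + z n)) *
      Complex.exp (-((2 * z n / (1 - z n ^ 2) : ℝ) * (θ n * Complex.I)))) ^ y n) atTop
      (nhds (Complex.exp ((-(z₀ * (1 + z₀ ^ 2) / (1 - z₀ ^ 2) ^ 2) * β : ℝ)))) := by
  obtain ⟨ψ, hψ, hexp⟩ := exists_exp_remainder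
  have hzc : Tendsto (fun n => (z n : ℂ)) atTop (nhds (z₀ : ℂ)) :=
    (Complex.continuous_ofReal.tendsto _).comp hz
  have hθc : Tendsto (fun n => (θ n : ℂ)) atTop (nhds 0) := by
    simpa [Function.comp_def] using (Complex.continuous_ofReal.tendsto _).comp hθ
  have hyc : Tendsto (fun n => (y n : ℂ) * (θ n : ℂ) ^ 2) atTop (nhds (β : ℂ)) := by
    have := (Complex.continuous_ofReal.tendsto _).comp hy
    simpa [Function.comp_def] using this
  have n1 : (1 - (z₀ : ℂ)) ≠ 0 := by
    rw [← Complex.ofReal_one, ← Complex.ofReal_sub]; exact_mod_cast (by linarith : 1 - z₀ ≠ 0)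
  have n2 : (1 + (z₀ : ℂ)) ≠ 0 := by
    rw [← Complex.ofReal_one, ← Complex.ofReal_add]; exact_mod_cast (by linarith : 1 + z₀ ≠ 0)
  have n3 : (1 - (z₀ : ℂ) ^ 2) ≠ 0 := by
    rw [show (1 - (z₀ : ℂ) ^ 2) = (1 - z₀) * (1 + z₀) by ring]; exact mul_ne_zero n1 n2
  -- In these terms, `(1 + ζ)(1 - z) / ((1 - ζ)(1 + z)) = 1 + s e / (1 - m e)` with `e = exp (iθ) - 1`.
  set s : ℕ → ℂ := fun n => 2 * z n / (1 - (z n : ℂ) ^ 2) with hs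
  set m : ℕ → ℂ := fun n => z n / (1 - (z n : ℂ)) with hm
  have hst : Tendsto s atTop (nhds (2 * z₀ / (1 - (z₀ : ℂ) ^ 2))) :=
    (hzc.const_mul 2).div ((hzc.pow 2).const_sub 1) n3
  have hmt : Tendsto m atTop (nhds (z₀ / (1 - (z₀ : ℂ)))) := hzc.div (hzc.const_sub 1) n1
  set w₁ : ℕ → ℂ := fun n => θ n * Complex.I with hw₁
  set w₂ : ℕ → ℂ := fun n => -(s n * (θ n * Complex.I)) with hw₂
  have hw₁t : Tendsto w₁ atTop (nhds 0) := by simpa using hθc.mul_const Complex.I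
  have hw₂t : Tendsto w₂ atTop (nhds 0) := by simpa using (hst.mul hw₁t).neg
  have hψ₁ : Tendsto (fun n => ψ (w₁ n)) atTop (nhds (1 / 2)) := hψ.comp hw₁t
  have hψ₂ : Tendsto (fun n => ψ (w₂ n)) atTop (nhds (1 / 2)) := hψ.comp hw₂t
  -- the factors `e₁` and `f₁` with `exp w₁ - 1 = w₁ * e₁` and `exp w₂ - 1 = w₂ * f₁`
  set e₁ : ℕ → ℂ := fun n => 1 + w₁ n * ψ (w₁ n) with he₁
  set f₁ : ℕ → ℂ := fun n => 1 + w₂ n * ψ (w₂ n) with hf₁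
  have he₁t : Tendsto e₁ atTop (nhds 1) := by simpa using (hw₁t.mul hψ₁).const_add 1
  have hf₁t : Tendsto f₁ atTop (nhds 1) := by simpa using (hw₂t.mul hψ₂).const_add 1
  set e : ℕ → ℂ := fun n => w₁ n * e₁ n with he
  have het : Tendsto e atTop (nhds 0) := by simpa using hw₁t.mul he₁t
  have hden : Tendsto (fun n => 1 - m n * e n) atTop (nhds 1) := by
    simpa using (hmt.mul het).const_sub 1
  -- `1 + θ ^ 2 * G` is the base of the power: its terms of order `θ` cancel.
  set G : ℕ → ℂ := fun n => (-(s n) ^ 2 * ψ (w₂ n) - s n * m n * e₁ n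
    + s n ^ 2 * ψ (w₂ n) * m n * e n - s n * ψ (w₁ n) + s n ^ 2 * e₁ n * f₁ n) /
      (1 - m n * e n) with hG
  have hGt : Tendsto G atTop (nhds (-((z₀ * (1 + z₀ ^ 2) / (1 - z₀ ^ 2) ^ 2 : ℝ) : ℂ))) := by
    have := (((((((hst.pow 2).neg).mul hψ₂).sub ((hst.mul hmt).mul he₁t)).add
      ((((hst.pow 2).mul hψ₂).mul hmt).mul het)).sub (hst.mul hψ₁)).add
      (((hst.pow 2).mul he₁t).mul hf₁t)).div hden one_ne_zero
    convert! this using 2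
    push_cast
    have e3 : (1 - (z₀ : ℂ) ^ 2) = (1 - z₀) * (1 + z₀) := by ring
    rw [e3]
    field_simp
    ring
  have hmain := tendsto_one_add_pow (g := fun n => (θ n : ℂ) ^ 2 * G n) (y := y)
    (by simpa using (hθc.pow 2).mul hGt)
    (by simpa only [mul_assoc] using hyc.mul hGt)
  convert! hmain.congr' ?_ using 2
  · push_cast; ring_nf
  filter_upwards [hden.eventually_ne one_ne_zero, hz.eventually_lt_const hz1,
    hz.eventually_const_lt hz0] with n hn hlt hgt
  congr 1
  have k1 : (1 - (z n : ℂ)) ≠ 0 := by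
    rw [← Complex.ofReal_one, ← Complex.ofReal_sub]; exact_mod_cast (by linarith : 1 - z n ≠ 0)
  have k2 : (1 + (z n : ℂ)) ≠ 0 := by
    rw [← Complex.ofReal_one, ← Complex.ofReal_add]; exact_mod_cast (by linarith : 1 + z n ≠ 0)
  have hE : Complex.exp (θ n * Complex.I) = 1 + e n := by
    have := hexp (w₁ n)
    simp only [he, he₁]; rw [show (θ n : ℂ) * Complex.I = w₁ n from rfl, this]; ring
  have hF : Complex.exp (-((2 * z n / (1 - z n ^ 2) : ℝ) * (θ n * Complex.I))) = 1 + w₂ n * f₁ n := by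
    have := hexp (w₂ n)
    simp only [hf₁]
    rw [show (-((2 * z n / (1 - z n ^ 2) : ℝ) * (θ n * Complex.I)) : ℂ) = w₂ n by
      simp only [hw₂, hs]; push_cast; ring, this]; ring
  have hq : (1 + (z n : ℂ) * Complex.exp (θ n * Complex.I)) * (1 - z n) /
      ((1 - (z n : ℂ) * Complex.exp (θ n * Complex.I)) * (1 + z n)) =
      1 + s n * e n / (1 - m n * e n) := by
    have k3 : (1 - (z n : ℂ) * (1 + e n)) = (1 - z n) * (1 - m n * e n) := by
      simp only [hm]; field_simp; ring
    have k4 : s n = 2 * z n / ((1 - z n) * (1 + z n)) := by simp only [hs]; congr 1; ring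
    rw [hE, k4]
    exact ratio_eq k1 k2 hn k3
  rw [hq, hF]
  simp only [hG]
  have hI : Complex.I ^ 2 = -1 := Complex.I_sq
  have hw1sq : w₁ n ^ 2 = -(θ n : ℂ) ^ 2 := by simp only [hw₁]; rw [mul_pow, hI]; ring
  have hw21 : w₂ n = - s n * w₁ n := by simp only [hw₂, hw₁]; ring
  rw [show (θ n : ℂ) ^ 2 = - w₁ n ^ 2 by rw [hw1sq]; ring]
  have hee : e n = w₁ n * (1 + w₁ n * ψ (w₁ n)) := rfl
  have hee1 : e₁ n = 1 + w₁ n * ψ (w₁ n) := rfl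
  have hff1 : f₁ n = 1 + w₂ n * ψ (w₂ n) := rfl
  rw [hff1, hw21, hee1]
  field_simp
  rw [hee]
  ring

/-- The integrand `(1 + ζ) ^ y / (1 - ζ) ^ (y + 1) / ζ ^ x` at `ζ = z exp (iθ)`, divided by its value
at `θ = 0`. -/
noncomputable def normKernel (z : ℝ) (x y : ℕ) (θ : ℝ) : ℂ :=
  (1 - (z : ℂ)) / (1 - (z : ℂ) * Complex.exp (θ * Complex.I)) *
    ((1 + (z : ℂ) * Complex.exp (θ * Complex.I)) * (1 - z) /
      ((1 - (z : ℂ) * Complex.exp (θ * Complex.I)) * (1 + z))) ^ y *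
    Complex.exp (-(x * (θ * Complex.I)))

theorem one_sub_circle_ne {z : ℝ} (hz : 0 < z) (hz1 : z < 1) (θ : ℝ) :
    1 - (z : ℂ) * Complex.exp (θ * Complex.I) ≠ 0 := by
  intro h0
  have := congrArg norm (sub_eq_zero.1 h0)
  rw [norm_mul, Complex.norm_exp_ofReal_mul_I, mul_one, Complex.norm_real,
    Real.norm_of_nonneg hz.le, norm_one] at this
  linarith

theorem continuous_normKernel {z : ℝ} (hz : 0 < z) (hz1 : z < 1) (x y : ℕ) :
    Continuous (normKernel z x y) := by
  have k2 : (1 + (z : ℂ)) ≠ 0 := by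
    rw [← Complex.ofReal_one, ← Complex.ofReal_add]; exact_mod_cast (by linarith : 1 + z ≠ 0)
  unfold normKernel
  refine Continuous.mul (Continuous.mul ?_ (Continuous.pow ?_ _)) (by fun_prop)
  · exact Continuous.div (by fun_prop) (by fun_prop) (one_sub_circle_ne hz hz1)
  · exact Continuous.div (by fun_prop) (by fun_prop)
      fun θ => mul_ne_zero (one_sub_circle_ne hz hz1 θ) k2

theorem norm_normKernel_le {z : ℝ} (hz : 0 < z) (hz1 : z < 1) (x y : ℕ) {θ : ℝ} (hθ : |θ| ≤ π) :
    ‖normKernel z x y θ‖ ≤ Real.exp (-(2 * z / (1 + z) ^ 2 / π ^ 2) * (y * θ ^ 2)) := by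
  unfold normKernel
  have e : Complex.exp (-((x : ℂ) * (θ * Complex.I))) =
      Complex.exp (((-(x * θ) : ℝ) : ℂ) * Complex.I) := by congr 1; push_cast; ring
  rw [norm_mul, norm_mul, e, Complex.norm_exp_ofReal_mul_I, mul_one, norm_pow]
  refine (mul_le_mul (norm_one_sub_div_le hz hz1 θ)
    (pow_le_pow_left₀ (norm_nonneg _) (norm_ratio_le hz hz1 hθ) y) (by positivity)
    zero_le_one).trans (le_of_eq ?_)
  rw [one_mul, ← Real.exp_nat_mul]
  congr 1; ring

/-- Saddle point asymptotics: the hypothesis relating `x n` and `y n` says that `z n` is the saddle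
point. After the substitution `θ = u / √n` the integrand converges pointwise to a Gaussian and is
dominated by a fixed one. -/
theorem tendsto_integral_normKernel {z : ℕ → ℝ} {z₀ : ℝ} (hz0 : 0 < z₀) (hz1 : z₀ < 1)
    (hz : Tendsto z atTop (nhds z₀)) {x y : ℕ → ℕ} {b : ℝ} (hb : 0 < b)
    (hy : Tendsto (fun n => (y n : ℝ) / n) atTop (nhds b))
    (hxy : ∀ᶠ n in atTop, (x n : ℝ) = y n * (2 * z n / (1 - z n ^ 2))) :
    Tendsto (fun n : ℕ => (√(n : ℝ) : ℂ) * ∫ θ in (-π)..π, normKernel (z n) (x n) (y n) θ) atTop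
      (nhds ((√(π / (z₀ * (1 + z₀ ^ 2) / (1 - z₀ ^ 2) ^ 2 * b)) : ℝ) : ℂ)) := by
  have hconst : Tendsto (fun n => 2 * z n / (1 + z n) ^ 2 / π ^ 2 * ((y n : ℝ) / n)) atTop
      (nhds (2 * z₀ / (1 + z₀) ^ 2 / π ^ 2 * b)) :=
    (((hz.const_mul 2).div ((hz.const_add 1).pow 2) (by positivity)).div_const _).mul hy
  have hcpos : 0 < 2 * z₀ / (1 + z₀) ^ 2 / π ^ 2 * b := by positivity
  obtain ⟨c, hc0, hc⟩ := exists_between hcpos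
  have hsqrt : Tendsto (fun n : ℕ => √(n : ℝ)) atTop atTop :=
    Real.tendsto_sqrt_atTop.comp tendsto_natCast_atTop_atTop
  -- rescale `θ = u / √n` and extend by zero to the whole line
  have hresc : ∀ᶠ n : ℕ in atTop,
      ∫ u : ℝ, (Set.Ioc (-π * √(n : ℝ)) (π * √(n : ℝ))).indicator
        (fun u => normKernel (z n) (x n) (y n) (u / √(n : ℝ))) u =
      (√(n : ℝ) : ℂ) * ∫ θ in (-π)..π, normKernel (z n) (x n) (y n) θ := by
    filter_upwards [eventually_gt_atTop 0] with n hn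
    have hs : 0 < √(n : ℝ) := Real.sqrt_pos.2 (by exact_mod_cast hn)
    rw [MeasureTheory.integral_indicator measurableSet_Ioc,
      ← intervalIntegral.integral_of_le (by nlinarith [Real.pi_pos]),
      intervalIntegral.integral_comp_div _ hs.ne', mul_div_cancel_right₀ _ hs.ne',
      mul_div_cancel_right₀ _ hs.ne', Complex.real_smul]
  refine Tendsto.congr' hresc ?_
  have hlim : ((√(π / (z₀ * (1 + z₀ ^ 2) / (1 - z₀ ^ 2) ^ 2 * b)) : ℝ) : ℂ) =
      ∫ u : ℝ, ((Real.exp (-(z₀ * (1 + z₀ ^ 2) / (1 - z₀ ^ 2) ^ 2 * b) * u ^ 2) : ℝ) : ℂ) := by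
    rw [integral_complex_ofReal, integral_gaussian]
  rw [hlim]
  refine MeasureTheory.tendsto_integral_filter_of_dominated_convergence
    (fun u => Real.exp (-c * u ^ 2)) ?_ ?_ (integrable_exp_neg_mul_sq hc0) ?_
  · filter_upwards [hz.eventually_lt_const hz1, hz.eventually_const_lt hz0] with n h1 h0
    refine Continuous.aestronglyMeasurable ?_ |>.indicator measurableSet_Ioc
    exact (continuous_normKernel h0 h1 _ _).comp (continuous_id.div_const _)
  · filter_upwards [hz.eventually_lt_const hz1, hz.eventually_const_lt hz0,
      hconst.eventually_const_lt hc, eventually_gt_atTop 0] with n h1 h0 hcn hn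
    have hs : 0 < √(n : ℝ) := Real.sqrt_pos.2 (by exact_mod_cast hn)
    refine Eventually.of_forall fun u => ?_
    by_cases hu : u ∈ Set.Ioc (-π * √(n : ℝ)) (π * √(n : ℝ))
    · rw [Set.indicator_of_mem hu]
      refine (norm_normKernel_le h0 h1 _ _ ?_).trans (Real.exp_le_exp.2 ?_)
      · rw [abs_le, le_div_iff₀ hs, div_le_iff₀ hs]
        exact ⟨hu.1.le, hu.2⟩
      · rw [div_pow, Real.sq_sqrt (Nat.cast_nonneg n)]
        have : -(2 * z n / (1 + z n) ^ 2 / π ^ 2) * (↑(y n) * (u ^ 2 / ↑n)) =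
          -(2 * z n / (1 + z n) ^ 2 / π ^ 2 * ((y n : ℝ) / n)) * u ^ 2 := by ring
        rw [this]
        nlinarith [sq_nonneg u]
    · rw [Set.indicator_of_notMem hu, norm_zero]; positivity
  · refine Eventually.of_forall fun u => ?_
    have hθ : Tendsto (fun n : ℕ => u / √(n : ℝ)) atTop (nhds 0) := hsqrt.const_div_atTop u
    have hyθ : Tendsto (fun n : ℕ => (y n : ℝ) * (u / √(n : ℝ)) ^ 2) atTop (nhds (b * u ^ 2)) := by
      refine (hy.mul_const (u ^ 2)).congr fun n => ?_
      rw [div_pow, Real.sq_sqrt (Nat.cast_nonneg n)]; ring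
    have hmain := tendsto_ratio_pow hz0 hz1 hz hθ hyθ
    have hE : Tendsto (fun n : ℕ => Complex.exp ((u / √(n : ℝ) : ℝ) * Complex.I)) atTop (nhds 1) := by
      have h1 := ((Complex.continuous_ofReal.tendsto _).comp hθ).mul_const Complex.I
      have h2 := (Complex.continuous_exp.tendsto _).comp h1
      simpa [Function.comp_def] using h2
    have hzc : Tendsto (fun n => (z n : ℂ)) atTop (nhds (z₀ : ℂ)) :=
      (Complex.continuous_ofReal.tendsto _).comp hz
    have n1 : (1 - (z₀ : ℂ)) ≠ 0 := by
      rw [← Complex.ofReal_one, ← Complex.ofReal_sub]; exact_mod_cast (by linarith : 1 - z₀ ≠ 0)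
    have hpre : Tendsto (fun n : ℕ => (1 - (z n : ℂ)) /
        (1 - (z n : ℂ) * Complex.exp ((u / √(n : ℝ) : ℝ) * Complex.I))) atTop (nhds 1) := by
      have := (hzc.const_sub 1).div ((hzc.mul hE).const_sub 1) (by simpa using n1)
      rwa [mul_one, div_self n1] at this
    have := hpre.mul hmain
    rw [one_mul, ← Complex.ofReal_exp] at this
    convert! this.congr' ?_ using 3
    · congr 1; ring
    · have hu : ∀ᶠ n : ℕ in atTop, |u| < π * √(n : ℝ) :=
        (hsqrt.const_mul_atTop Real.pi_pos).eventually_gt_atTop _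
      filter_upwards [hu, hxy] with n hn hx
      rw [abs_lt] at hn
      have hmem : u ∈ Set.Ioc (-π * √(n : ℝ)) (π * √(n : ℝ)) := ⟨by linarith [hn.1], hn.2.le⟩
      rw [Set.indicator_of_mem hmem]
      unfold normKernel
      rw [mul_pow, ← Complex.exp_nat_mul, mul_assoc]
      congr 3
      have hx' : (x n : ℂ) = y n * ((2 * z n / (1 - z n ^ 2) : ℝ) : ℂ) := by
        have := congrArg Complex.ofReal hx
        rw [Complex.ofReal_mul] at this
        exact_mod_cast this
      rw [hx']; ring

/-! ### The tail of the series -/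

/-- The `k`-th term `C(k,x) C(k,y) 2^{-(k+1)}` of the series. -/
noncomputable def delannoyTerm (x y k : ℕ) : ℝ :=
  (Nat.choose k x : ℝ) * (Nat.choose k y : ℝ) / 2 ^ (k + 1)

theorem delannoyTerm_nonneg (x y k : ℕ) : 0 ≤ delannoyTerm x y k := by
  unfold delannoyTerm; positivity

theorem delannoyTerm_succ_le {x y k : ℕ} {ρ : ℝ} (hx : x ≤ k) (hy : y ≤ k)
    (h : ((k : ℝ) + 1) ^ 2 ≤ 2 * ρ * (((k : ℝ) + 1 - x) * ((k : ℝ) + 1 - y))) :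
    delannoyTerm x y (k + 1) ≤ ρ * delannoyTerm x y k := by
  have hx' : (x : ℝ) ≤ k := by exact_mod_cast hx
  have hy' : (y : ℝ) ≤ k := by exact_mod_cast hy
  have e : ∀ j : ℕ, j ≤ k →
      (k.choose j : ℝ) * ((k : ℝ) + 1) = ((k + 1).choose j : ℝ) * ((k : ℝ) + 1 - j) := by
    intro j hj
    have := congrArg (Nat.cast : ℕ → ℝ) (Nat.choose_mul_succ_eq k j)
    push_cast [Nat.cast_sub (by omega : j ≤ k + 1)] at this
    exact this
  have ex := e x hx
  have ey := e y hy
  have px : 0 < (k : ℝ) + 1 - x := by linarith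
  have py : 0 < (k : ℝ) + 1 - y := by linarith
  have hprod := congrArg₂ (· * ·) ex ey
  set P := ((k : ℝ) + 1 - x) * ((k : ℝ) + 1 - y) with hP
  have hPpos : 0 < P := mul_pos px py
  set c := (k.choose x : ℝ) * k.choose y with hc
  set d := ((k + 1).choose x : ℝ) * (k + 1).choose y with hd
  have hcd : c * ((k : ℝ) + 1) ^ 2 = d * P := by rw [hc, hd, hP]; linarith
  have hcn : 0 ≤ c := by positivity
  have hle : d ≤ 2 * ρ * c := by
    refine le_of_mul_le_mul_right ?_ hPpos
    rw [← hcd]; nlinarith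
  unfold delannoyTerm
  rw [← hc, ← hd, pow_succ, div_le_iff₀ (by positivity)]
  field_simp
  linarith

/-- The tail of the series is negligible. For every fixed `m`, the ratio of consecutive terms is at
most `ρ < 1` from index `n - m` on, once `n` is large; so the tail from `n` is at most `ρ ^ m` times
the tail from `n - m`, hence at most `ρ ^ m` times the whole series. -/
theorem tendsto_partialSum_div (a b : ℝ)
    (ha1 : a < 1) (hb1 : b < 1) (hab : (1 - a) * (1 - b) > 1 / 2) (x y : ℕ → ℕ)
    (hx : Tendsto (fun n => (x n : ℝ) / n) atTop (nhds a))
    (hy : Tendsto (fun n => (y n : ℝ) / n) atTop (nhds b))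
    (hsum : ∀ x y, Summable (delannoyTerm x y)) (hpos : ∀ x y, 0 < ∑' k, delannoyTerm x y k) :
    Tendsto (fun n => delannoyPartialSum n (x n) (y n) / ∑' k, delannoyTerm (x n) (y n) k)
      atTop (nhds 1) := by
  obtain ⟨q, hq1, hq2⟩ := exists_between hab
  -- The ratio of terms `k` and `k + 1` is close to `1 / (2 (1 - x / k) (1 - y / k))`.
  set ρ : ℝ := 1 / (2 * q) with hρ
  have hqpos : 0 < q := by linarith
  have hρ1 : ρ < 1 := by rw [hρ, div_lt_one (by positivity)]; linarith
  have hρ0 : 0 < ρ := by positivity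
  have hratio : ∀ m : ℕ, ∀ᶠ n : ℕ in atTop, m ≤ n ∧ ∀ k, n - m ≤ k →
      delannoyTerm (x n) (y n) (k + 1) ≤ ρ * delannoyTerm (x n) (y n) k := by
    intro m
    have hmn : Tendsto (fun n : ℕ => (n : ℝ) / ((n : ℝ) - m)) atTop (nhds 1) := by
      have h1 : Tendsto (fun n : ℕ => 1 - (m : ℝ) / n) atTop (nhds 1) := by
        simpa using (tendsto_const_div_atTop_nhds_zero_nat (m : ℝ)).const_sub 1
      have h2 := h1.inv₀ one_ne_zero
      rw [inv_one] at h2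
      refine h2.congr' ?_
      filter_upwards [eventually_gt_atTop m] with n hn
      have : (m : ℝ) < n := by exact_mod_cast hn
      have h0 : (0 : ℝ) < n := lt_of_le_of_lt (Nat.cast_nonneg m) this
      have : (n : ℝ) - m ≠ 0 := by linarith
      field_simp
    have aux : ∀ w : ℕ → ℕ, ∀ c : ℝ, Tendsto (fun n => (w n : ℝ) / n) atTop (nhds c) →
        Tendsto (fun n : ℕ => (w n : ℝ) / ((n : ℝ) - m)) atTop (nhds c) := by
      intro w c hw
      have := hw.mul hmn
      rw [mul_one] at this
      refine this.congr' ?_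
      filter_upwards [eventually_gt_atTop 0] with n hn
      have : (n : ℝ) ≠ 0 := by exact_mod_cast hn.ne'
      field_simp
    have hxm := aux x a hx
    have hym := aux y b hy
    have hprod := (hxm.const_sub 1).mul (hym.const_sub 1)
    filter_upwards [hprod.eventually_const_lt hq2, hxm.eventually_lt_const ha1,
      hym.eventually_lt_const hb1, eventually_gt_atTop m] with n h1 h2 h3 h4
    refine ⟨h4.le, fun k hk => ?_⟩
    have hnm : (0 : ℝ) < (n : ℝ) - m := by
      have : (m : ℝ) < n := by exact_mod_cast h4
      linarith
    have hk' : (n : ℝ) - m ≤ k := by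
      have : n ≤ k + m := by omega
      have : (n : ℝ) ≤ k + m := by exact_mod_cast this
      linarith
    rw [div_lt_one hnm] at h2 h3
    have hxk : x n ≤ k := by
      have : (x n : ℝ) ≤ k := by linarith
      exact_mod_cast this
    have hyk : y n ≤ k := by
      have : (y n : ℝ) ≤ k := by linarith
      exact_mod_cast this
    refine delannoyTerm_succ_le hxk hyk ?_
    have hK : (0 : ℝ) < k + 1 := by positivity
    have i1 : (x n : ℝ) / ((k : ℝ) + 1) ≤ (x n : ℝ) / ((n : ℝ) - m) := by gcongr; linarith
    have i2 : (y n : ℝ) / ((k : ℝ) + 1) ≤ (y n : ℝ) / ((n : ℝ) - m) := by gcongr; linarith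
    have j1 : 0 ≤ 1 - (x n : ℝ) / ((n : ℝ) - m) := by
      rw [sub_nonneg, div_le_one hnm]; exact h2.le
    have j2 : 0 ≤ 1 - (y n : ℝ) / ((n : ℝ) - m) := by
      rw [sub_nonneg, div_le_one hnm]; exact h3.le
    have i3 : q ≤ (1 - (x n : ℝ) / ((k : ℝ) + 1)) * (1 - (y n : ℝ) / ((k : ℝ) + 1)) :=
      h1.le.trans (mul_le_mul (by linarith) (by linarith) j2 (by linarith))
    have e : ((k : ℝ) + 1 - x n) * ((k : ℝ) + 1 - y n) = ((k : ℝ) + 1) ^ 2 *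
      ((1 - (x n : ℝ) / ((k : ℝ) + 1)) * (1 - (y n : ℝ) / ((k : ℝ) + 1))) := by field_simp
    rw [e]
    calc ((k : ℝ) + 1) ^ 2 = 2 * ρ * (((k : ℝ) + 1) ^ 2 * q) := by rw [hρ]; field_simp
      _ ≤ _ := by gcongr
  have hpowle : ∀ m n : ℕ, (m ≤ n ∧ ∀ k, n - m ≤ k →
      delannoyTerm (x n) (y n) (k + 1) ≤ ρ * delannoyTerm (x n) (y n) k) → ∀ j i : ℕ,
      delannoyTerm (x n) (y n) (n - m + i + j) ≤ ρ ^ j * delannoyTerm (x n) (y n) (n - m + i) := by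
    intro m n h j i
    induction j with
    | zero => simp
    | succ j ih =>
      calc delannoyTerm (x n) (y n) (n - m + i + (j + 1))
          ≤ ρ * delannoyTerm (x n) (y n) (n - m + i + j) := h.2 _ (show n - m ≤ n - m + i + j by omega)
        _ ≤ ρ * (ρ ^ j * delannoyTerm (x n) (y n) (n - m + i)) := by gcongr
        _ = _ := by ring
  have hlow : ∀ m : ℕ, ∀ᶠ n : ℕ in atTop, 1 - ρ ^ m ≤
      delannoyPartialSum n (x n) (y n) / ∑' k, delannoyTerm (x n) (y n) k := by
    intro m
    filter_upwards [hratio m] with n hn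
    have hs := hsum (x n) (y n)
    have hsplit := hs.sum_add_tsum_nat_add n
    have hsplit' := hs.sum_add_tsum_nat_add (n - m)
    have hfin : 0 ≤ ∑ k ∈ Finset.range (n - m), delannoyTerm (x n) (y n) k :=
      Finset.sum_nonneg fun _ _ => delannoyTerm_nonneg _ _ _
    have htail : ∑' k, delannoyTerm (x n) (y n) (k + n) ≤
        ρ ^ m * ∑' k, delannoyTerm (x n) (y n) (k + (n - m)) := by
      rw [← tsum_mul_left]
      refine Summable.tsum_le_tsum (fun i => ?_) ((summable_nat_add_iff n).2 hs)
        (((summable_nat_add_iff (n - m)).2 hs).mul_left _)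
      have := hpowle m n hn m i
      have hmn := hn.1
      rwa [show n - m + i + m = i + n by omega, show n - m + i = i + (n - m) by omega] at this
    have hS : delannoyPartialSum n (x n) (y n) =
      ∑ k ∈ Finset.range n, delannoyTerm (x n) (y n) k := rfl
    rw [le_div_iff₀ (hpos _ _), hS]
    have : ρ ^ m * ∑' k, delannoyTerm (x n) (y n) (k + (n - m)) ≤
        ρ ^ m * ∑' k, delannoyTerm (x n) (y n) k := by
      exact mul_le_mul_of_nonneg_left (by linarith) (by positivity)
    linarith
  have hup : ∀ n, delannoyPartialSum n (x n) (y n) / ∑' k, delannoyTerm (x n) (y n) k ≤ 1 := by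
    intro n
    rw [div_le_one (hpos _ _)]
    exact (hsum _ _).sum_le_tsum _ fun k _ => delannoyTerm_nonneg _ _ _
  refine tendsto_order.2 ⟨fun l hl => ?_, fun l hl => Eventually.of_forall fun n => (hup n).trans_lt hl⟩
  obtain ⟨m, hm⟩ := exists_pow_lt_of_lt_one (sub_pos.2 hl) hρ1
  filter_upwards [hlow m] with n hn
  linarith

/-! ### Identification of the saddle point and conclusion -/

theorem hasSum_delannoyTerm {z : ℝ} (hz : 0 < z) (hz1 : z < 1) (x y : ℕ) :
    HasSum (fun k : ℕ => ((delannoyTerm x y k : ℝ) : ℂ))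
      (((1 + z) ^ y / (1 - z) ^ (y + 1) / z ^ x : ℝ) * ((2 * π : ℂ)⁻¹ *
        ∫ θ in (-π)..π, normKernel z x y θ)) := by
  have k0 : (z : ℂ) ≠ 0 := by exact_mod_cast hz.ne'
  have k1 : (1 - (z : ℂ)) ≠ 0 := by
    rw [← Complex.ofReal_one, ← Complex.ofReal_sub]; exact_mod_cast (by linarith : 1 - z ≠ 0)
  have k2 : (1 + (z : ℂ)) ≠ 0 := by
    rw [← Complex.ofReal_one, ← Complex.ofReal_add]; exact_mod_cast (by linarith : 1 + z ≠ 0)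
  convert! hasSum_delannoy hz hz1 x y using 1
  · funext k; simp [delannoyTerm]
  · rw [mul_left_comm, ← intervalIntegral.integral_const_mul]
    congr 2
    funext θ
    have h1 := one_sub_circle_ne hz hz1 θ
    unfold normKernel
    rw [Complex.exp_neg, Complex.exp_nat_mul, div_pow, mul_pow, mul_pow, mul_pow]
    have := Complex.exp_ne_zero (θ * Complex.I)
    push_cast
    field_simp
    ring

theorem summable_delannoyTerm (x y : ℕ) : Summable (delannoyTerm x y) :=
  Complex.summable_ofReal.1
    (hasSum_delannoyTerm (z := 1 / 2) (by norm_num) (by norm_num) x y).summable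

theorem tsum_delannoyTerm_pos (x y : ℕ) : 0 < ∑' k, delannoyTerm x y k := by
  refine (summable_delannoyTerm x y).tsum_pos (delannoyTerm_nonneg x y) (max x y) ?_
  have h1 := Nat.choose_pos (le_max_left x y)
  have h2 := Nat.choose_pos (le_max_right x y)
  unfold delannoyTerm
  positivity

section saddle

variable {A B : ℝ}

theorem saddle_bounds (hA : 0 < A) (hB : 0 < B) :
    0 < A / (B + √(A ^ 2 + B ^ 2)) ∧ A / (B + √(A ^ 2 + B ^ 2)) < 1 := by
  have hR : A < √(A ^ 2 + B ^ 2) := Real.lt_sqrt_of_sq_lt (by nlinarith)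
  refine ⟨by positivity, ?_⟩
  rw [div_lt_one (by positivity)]; linarith

/-- The saddle point `z = A / (B + R)` solves `2z / (1 - z²) = A / B`, and the quantities of the
asymptotic formula are rational in `A`, `B` and `R`. -/
theorem saddle_eqs (hA : 0 < A) (hB : 0 < B) :
    let R := √(A ^ 2 + B ^ 2)
    let z := A / (B + R)
    2 * z / (1 - z ^ 2) = A / B ∧ (1 + z ^ 2) / (1 - z ^ 2) = R / B ∧
      (1 + z) / (1 - z) = (A + R) / B ∧ 1 / (1 - z) = (A + B + R) / (2 * B) := by
  intro R z
  have hz := saddle_bounds hA hB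
  have hR2 : R ^ 2 = A ^ 2 + B ^ 2 := Real.sq_sqrt (by positivity)
  have hRpos : 0 < R := Real.sqrt_pos.2 (by positivity)
  have hz0 : 0 < z := hz.1
  have hz1 : z < 1 := hz.2
  have hzR : z * (B + R) = A := by simp only [z]; field_simp
  clear_value z
  clear_value R
  have h1 : 1 - z ≠ 0 := by linarith
  have h2 : 1 - z ^ 2 ≠ 0 := by nlinarith
  have hBR : B + R ≠ 0 := by positivity
  -- everything follows from `(B + R) z = A` and `(B + R) z ^ 2 = R - B`
  have hz2 : (B + R) * z ^ 2 = R - B := by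
    refine mul_left_cancel₀ hBR ?_
    linear_combination (z * (B + R) + A) * hzR - hR2
  have hAz : z * A = R - B := by linear_combination hz2 - z * hzR
  have c1 : (B + R) * (1 - z ^ 2) = 2 * B := by linear_combination -hz2
  have c2 : (B + R) * (1 + z ^ 2) = 2 * R := by linear_combination hz2
  refine ⟨?_, ?_, ?_, ?_⟩
  · rw [div_eq_div_iff h2 hB.ne']
    refine mul_left_cancel₀ hBR ?_
    linear_combination 2 * B * hzR - A * c1
  · rw [div_eq_div_iff h2 hB.ne']
    refine mul_left_cancel₀ hBR ?_
    linear_combination B * c2 - R * c1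
  · rw [div_eq_div_iff h1 hB.ne']
    refine mul_left_cancel₀ hBR ?_
    linear_combination (B + A + R) * hzR - hR2
  · rw [div_eq_div_iff h1 (by positivity)]
    linear_combination hAz + hzR

end saddle

/-- The claimed asymptotic expression, in terms of the saddle point: the value of the integrand at
`z` times the Gaussian factor. -/
theorem target_eq {A B : ℝ} (hA : 0 < A) (hB : 0 < B) {n x y : ℕ} (hn : 0 < n)
    (hx : A * n = x) (hy : B * n = y) :
    let R := √(A ^ 2 + B ^ 2)
    let z := A / (B + R)
    (A + B + R) * ((A + R) ^ B * (B + R) ^ A / (A ^ A * B ^ B)) ^ n /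
        (2 * √(2 * π * n) * √(A * B * R)) =
      (1 + z) ^ y / (1 - z) ^ (y + 1) / z ^ x * (√(B / (2 * π * (A * R))) / √(n : ℝ)) := by
  intro R z
  obtain ⟨-, -, e3, e4⟩ := saddle_eqs hA hB
  have hRpos : 0 < R := Real.sqrt_pos.2 (by positivity)
  have hn' : (0 : ℝ) < n := by exact_mod_cast hn
  have hpow : ∀ t : ℝ, 0 ≤ t → (t ^ B) ^ n = t ^ y ∧ (t ^ A) ^ n = t ^ x := by
    intro t ht
    rw [← Real.rpow_mul_natCast ht, ← Real.rpow_mul_natCast ht, hx, hy, Real.rpow_natCast,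
      Real.rpow_natCast]
    exact ⟨rfl, rfl⟩
  have hK : (1 + z) ^ y / (1 - z) ^ (y + 1) / z ^ x =
      ((A + R) / B) ^ y * ((A + B + R) / (2 * B)) * ((B + R) / A) ^ x := by
    have hinv : (B + R) / A = z⁻¹ := by simp only [z, inv_div]
    change (1 + z) / (1 - z) = (A + R) / B at e3
    change 1 / (1 - z) = (A + B + R) / (2 * B) at e4
    clear_value z
    rw [← e3, ← e4, hinv, div_pow, inv_pow, pow_succ]
    simp only [div_eq_mul_inv, mul_inv, one_mul]
    ring
  have hroot : √(B / (2 * π * (A * R))) / √(n : ℝ) = B / (√(2 * π * n) * √(A * B * R)) := by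
    rw [← Real.sqrt_div' _ hn'.le, ← Real.sqrt_mul (by positivity)]
    nth_rewrite 2 [← Real.sqrt_sq hB.le]
    rw [← Real.sqrt_div (by positivity)]
    congr 1
    field_simp
  rw [hK, hroot, div_pow, mul_pow, mul_pow, (hpow _ (by positivity)).1, (hpow _ (by positivity)).2,
    (hpow _ hA.le).2, (hpow _ hB.le).1]
  have s1 : 0 < √(2 * π * n) := Real.sqrt_pos.2 (by positivity)
  have s2 : 0 < √(A * B * R) := Real.sqrt_pos.2 (by positivity)
  rw [div_pow, div_pow]
  field_simp

/-- The first branch of Lemma 4.1(b): if `x(n)/n → a`, `y(n)/n → b` with `0 < a, b < 1` and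
`(1−a)(1−b) > 1/2`, then, writing `a_n = x(n)/n`, `b_n = y(n)/n`, `r_n = √(a_n² + b_n²)`,
`S(n, x(n), y(n))` is asymptotically
`(a_n + b_n + r_n) ((a_n + r_n)^{b_n} (b_n + r_n)^{a_n} / (a_n^{a_n} b_n^{b_n}))^n
  / (2 √(2πn) √(a_n b_n r_n))`. -/
theorem delannoyPartialSum_asymptotics_outside (a b : ℝ)
    (ha0 : 0 < a) (ha1 : a < 1) (hb0 : 0 < b) (hb1 : b < 1)
    (hab : (1 - a) * (1 - b) > 1 / 2)
    (x y : ℕ → ℕ) (hx1 : ∀ n, 1 ≤ x n) (hy1 : ∀ n, 1 ≤ y n)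
    (hx : Tendsto (fun n => (x n : ℝ) / n) atTop (nhds a))
    (hy : Tendsto (fun n => (y n : ℝ) / n) atTop (nhds b)) :
    Tendsto (fun n : ℕ =>
        delannoyPartialSum n (x n) (y n) /
          (((x n : ℝ) / n + (y n : ℝ) / n + Real.sqrt (((x n : ℝ) / n) ^ 2 + ((y n : ℝ) / n) ^ 2)) *
            (((x n : ℝ) / n + Real.sqrt (((x n : ℝ) / n) ^ 2 + ((y n : ℝ) / n) ^ 2)) ^ ((y n : ℝ) / n) *
              ((y n : ℝ) / n + Real.sqrt (((x n : ℝ) / n) ^ 2 + ((y n : ℝ) / n) ^ 2)) ^ ((x n : ℝ) / n) /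
              (((x n : ℝ) / n) ^ ((x n : ℝ) / n) * ((y n : ℝ) / n) ^ ((y n : ℝ) / n))) ^ n /
            (2 * Real.sqrt (2 * Real.pi * n) *
              Real.sqrt ((x n : ℝ) / n * ((y n : ℝ) / n) *
                Real.sqrt (((x n : ℝ) / n) ^ 2 + ((y n : ℝ) / n) ^ 2)))))
      atTop (nhds 1) := by
  have hpart := tendsto_partialSum_div a b ha1 hb1 hab x y hx hy summable_delannoyTerm
    tsum_delannoyTerm_pos
  set A : ℕ → ℝ := fun n => (x n : ℝ) / n with hA
  set B : ℕ → ℝ := fun n => (y n : ℝ) / n with hB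
  set R : ℕ → ℝ := fun n => √(A n ^ 2 + B n ^ 2) with hR
  set z : ℕ → ℝ := fun n => A n / (B n + R n) with hzdef
  set r : ℝ := √(a ^ 2 + b ^ 2) with hr
  set z₀ : ℝ := a / (b + r) with hz₀
  have hrpos : 0 < r := Real.sqrt_pos.2 (by positivity)
  have hRt : Tendsto R atTop (nhds r) :=
    (Real.continuous_sqrt.tendsto _).comp ((hx.pow 2).add (hy.pow 2))
  have hzt : Tendsto z atTop (nhds z₀) := hx.div (hy.add hRt) (by positivity)
  have hAB : ∀ n, 0 < n → 0 < A n ∧ 0 < B n := by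
    intro n hn
    have h1 : (0 : ℝ) < x n := by exact_mod_cast hx1 n
    have h2 : (0 : ℝ) < y n := by exact_mod_cast hy1 n
    have h3 : (0 : ℝ) < n := by exact_mod_cast hn
    exact ⟨by positivity, by positivity⟩
  obtain ⟨hz0, hz1⟩ := saddle_bounds ha0 hb0
  obtain ⟨e1, e2, -, -⟩ := saddle_eqs ha0 hb0
  have hxy : ∀ᶠ n in atTop, (x n : ℝ) = y n * (2 * z n / (1 - z n ^ 2)) := by
    filter_upwards [eventually_gt_atTop 0] with n hn
    obtain ⟨h1, h2⟩ := hAB n hn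
    have := (saddle_eqs h1 h2).1
    simp only [hzdef, hR]
    rw [this]
    have h3 : (0 : ℝ) < n := by exact_mod_cast hn
    have h4 : (0 : ℝ) < y n := by exact_mod_cast hy1 n
    simp only [hA, hB]
    field_simp
  have hint := tendsto_integral_normKernel hz0 hz1 hzt hb0 hy hxy
  have hconst : π / (z₀ * (1 + z₀ ^ 2) / (1 - z₀ ^ 2) ^ 2 * b) = 2 * π * b / (a * r) := by
    have : z₀ * (1 + z₀ ^ 2) / (1 - z₀ ^ 2) ^ 2 =
        (2 * z₀ / (1 - z₀ ^ 2)) * ((1 + z₀ ^ 2) / (1 - z₀ ^ 2)) / 2 := by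
      have hne : 1 - z₀ ^ 2 ≠ 0 := by
        have h0 : 0 < z₀ := hz0
        have h1 : z₀ < 1 := hz1
        nlinarith
      clear_value z₀
      field_simp
    rw [this, e1, e2, ← hr]
    field_simp
  have hre := (Complex.continuous_re.tendsto _).comp (hint.const_mul ((2 * π : ℂ)⁻¹))
  have hlimre : ((2 * π : ℂ)⁻¹ *
      ((√(π / (z₀ * (1 + z₀ ^ 2) / (1 - z₀ ^ 2) ^ 2 * b)) : ℝ) : ℂ)).re =
      √(b / (2 * π * (a * r))) := by
    rw [hconst]
    have e : ((2 * π : ℂ)⁻¹ * ((√(2 * π * b / (a * r)) : ℝ) : ℂ)) =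
      (((2 * π)⁻¹ * √(2 * π * b / (a * r)) : ℝ) : ℂ) := by push_cast; ring
    rw [e, Complex.ofReal_re]
    have h2 : (2 * π)⁻¹ = √(((2 * π)⁻¹) ^ 2) := (Real.sqrt_sq (by positivity)).symm
    rw [h2, ← Real.sqrt_mul (by positivity)]
    congr 1
    field_simp
  have hlim : Tendsto (fun n => √(B n / (2 * π * (A n * R n)))) atTop
      (nhds (√(b / (2 * π * (a * r))))) :=
    (Real.continuous_sqrt.tendsto _).comp
      (hy.div ((hx.mul hRt).const_mul (2 * π)) (by positivity))
  have hne : √(b / (2 * π * (a * r))) ≠ 0 := (Real.sqrt_pos.2 (by positivity)).ne'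
  have hquot := hre.div hlim hne
  have hfinal := hpart.mul hquot
  erw [hlimre] at hfinal
  rw [div_self hne, mul_one] at hfinal
  refine hfinal.congr' ?_
  filter_upwards [eventually_gt_atTop 0] with n hn
  obtain ⟨h1, h2⟩ := hAB n hn
  have h3 : (0 : ℝ) < n := by exact_mod_cast hn
  have hs : 0 < √(n : ℝ) := Real.sqrt_pos.2 h3
  obtain ⟨hzn0, hzn1⟩ := saddle_bounds h1 h2
  have htarget := target_eq h1 h2 hn (x := x n) (y := y n)
    (by simp only [hA]; field_simp) (by simp only [hB]; field_simp)
  have hD := (hasSum_delannoyTerm hzn0 hzn1 (x n) (y n)).tsum_eq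
  rw [← Complex.ofReal_tsum] at hD
  set K₀ : ℝ := (1 + z n) ^ y n / (1 - z n) ^ (y n + 1) / z n ^ x n with hK₀
  have hK₀pos : 0 < K₀ := by
    have : 0 < 1 - z n := sub_pos.2 hzn1
    have : 0 < z n := hzn0
    positivity
  have hDre : ∑' k, delannoyTerm (x n) (y n) k = K₀ * ((2 * π : ℂ)⁻¹ *
        ∫ θ in (-π)..π, normKernel (z n) (x n) (y n) θ).re := by
    have := congrArg Complex.re hD
    rw [Complex.ofReal_re, Complex.re_ofReal_mul] at this
    exact this
  have hJ : ((2 * π : ℂ)⁻¹ * ((√(n : ℝ) : ℂ) *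
      ∫ θ in (-π)..π, normKernel (z n) (x n) (y n) θ)).re =
      √(n : ℝ) * ((2 * π : ℂ)⁻¹ * ∫ θ in (-π)..π, normKernel (z n) (x n) (y n) θ).re := by
    rw [mul_left_comm, Complex.re_ofReal_mul]
  have hDpos := tsum_delannoyTerm_pos (x n) (y n)
  have hq : 0 < √(B n / (2 * π * (A n * R n))) := by
    have : 0 < R n := Real.sqrt_pos.2 (by positivity)
    exact Real.sqrt_pos.2 (by positivity)
  change _ = delannoyPartialSum n (x n) (y n) / ((A n + B n + R n) *
    ((A n + R n) ^ (B n) * (B n + R n) ^ (A n) / (A n ^ A n * B n ^ B n)) ^ n /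
    (2 * √(2 * π * n) * √(A n * B n * R n)))
  rw [htarget]
  change delannoyPartialSum n (x n) (y n) / (∑' k, delannoyTerm (x n) (y n) k) *
    (((2 * π : ℂ)⁻¹ * ((√(n : ℝ) : ℂ) *
      ∫ θ in (-π)..π, normKernel (z n) (x n) (y n) θ)).re / √(B n / (2 * π * (A n * R n)))) =
    delannoyPartialSum n (x n) (y n) / (K₀ * (√(B n / (2 * π * (A n * R n))) / √(n : ℝ)))
  rw [hJ]
  set I := ((2 * π : ℂ)⁻¹ * ∫ θ in (-π)..π, normKernel (z n) (x n) (y n) θ).re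
  rw [hDre] at hDpos ⊢
  have hI : I ≠ 0 := by rintro h; rw [h] at hDpos; simp at hDpos
  field_simp
end
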